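/- Let π and π* be two stationary policies for a finite entropy-regularized MDP with discount γ ∈ [0,1). Then the following two inequalities are equivalent: (1) E_{τ∼π*}[ Σ_{t=0}^∞ γ^t r(s_t,a_t) ] ≥ E_{τ∼π}[ Σ_{t=0}^∞ γ^t r(s_t,a_t) ]; (2) E_{τ∼π*}[ Σ_{t=0}^∞ γ^t A^π(s_t,a_t) ] + E_{τ∼π}[ Σ_{t=0}^∞ γ^t ε h^π_{s_t} ] ≥ 0. -/

import Mathlib

/-!
Both inequalities compare the same two numbers. Write `R(π)` and `H(π)` for the discounted reward
and the discounted, `ε`-scaled entropy along trajectories of `π`. Since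
`A^π(s, a) = r(s, a) + γ E[V^π(s')] - V^π(s)`, the value terms telescope along trajectories of
`π*`, so that `E_{π*}[∑ γ^t A^π] = R(π*) - E_μ[V^π]` (`tsum_expAt_adv`, the performance difference
identity). Conditioning on the initial state gives `E_μ[V^π] = R(π) + H(π)` (`sum_mul_valueV`).
Hence the left side of the second inequality is `R(π*) - R(π)`. Every series involved converges
absolutely, by comparison with a geometric series (`summable_expAt`).
-/

open scoped BigOperators

/-- `p` is a probability distribution on the finite type `α`. -/
def IsProb {α : Type*} [Fintype α] (p : α → ℝ) : Prop :=
  (∀ x, 0 ≤ p x) ∧ ∑ x, p x = 1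

/-- Shannon entropy of a finite distribution.  The convention `0 * log 0 = 0`
holds automatically since `Real.log 0 = 0`. -/
noncomputable def entropy {α : Type*} [Fintype α] (p : α → ℝ) : ℝ :=
  -∑ x, p x * Real.log (p x)

/-- Distribution of the state `s_t` at time `t` of a trajectory generated by
the stationary policy `π` in the MDP with transition kernel `P`, started from
the initial state distribution `μ`. -/
noncomputable def stateDist {S A : Type*} [Fintype S] [Fintype A]
    (P : S → A → S → ℝ) (π : S → A → ℝ) (μ : S → ℝ) : ℕ → S → ℝ
  | 0 => μ
  | t + 1 => fun s' => ∑ s, ∑ a, stateDist P π μ t s * π s a * P s a s'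

/-- `E_{τ ∼ π}[ g (s_t, a_t) ]` for a trajectory generated by the stationary
policy `π` (with transition kernel `P`), started from `s₀ ∼ μ`. -/
noncomputable def expAt {S A : Type*} [Fintype S] [Fintype A]
    (P : S → A → S → ℝ) (π : S → A → ℝ) (μ : S → ℝ) (t : ℕ) (g : S → A → ℝ) : ℝ :=
  ∑ s, stateDist P π μ t s * ∑ a, π s a * g s a

/-- The Dirac distribution concentrated at the state `s`. -/
def dirac {S : Type*} [DecidableEq S] (s : S) : S → ℝ :=
  fun s' => if s' = s then 1 else 0

/-- Entropy-regularized (`γ`-discounted) value function: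
`V^π(s) = E[ ∑ₜ γ^t (r(s_t,a_t) + ε h^π_{s_t}) | s₀ = s ]`. -/
noncomputable def valueV {S A : Type*} [Fintype S] [Fintype A] [DecidableEq S]
    (P : S → A → S → ℝ) (r : S → A → ℝ) (π : S → A → ℝ) (ε γ : ℝ) (s : S) : ℝ :=
  ∑' t : ℕ, γ ^ t * expAt P π (dirac s) t (fun s' a => r s' a + ε * entropy (π s'))

/-- Entropy-regularized Q-function: `Q^π(s,a) = r(s,a) + γ E_{s' ∼ P(·|s,a)}[V^π(s')]`. -/
noncomputable def valueQ {S A : Type*} [Fintype S] [Fintype A] [DecidableEq S]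
    (P : S → A → S → ℝ) (r : S → A → ℝ) (π : S → A → ℝ) (ε γ : ℝ) (s : S) (a : A) : ℝ :=
  r s a + γ * ∑ s', P s a s' * valueV P r π ε γ s'

/-- Advantage function `A^π(s,a) = Q^π(s,a) - V^π(s)`. -/
noncomputable def adv {S A : Type*} [Fintype S] [Fintype A] [DecidableEq S]
    (P : S → A → S → ℝ) (r : S → A → ℝ) (π : S → A → ℝ) (ε γ : ℝ) (s : S) (a : A) : ℝ :=
  valueQ P r π ε γ s a - valueV P r π ε γ s

section Helpers

variable {S A : Type*} [Fintype S] [Fintype A]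

lemma isProb_stateDist {P : S → A → S → ℝ} {π : S → A → ℝ} {μ : S → ℝ}
    (hP : ∀ s a, IsProb (P s a)) (hπ : ∀ s, IsProb (π s)) (hμ : IsProb μ) (t : ℕ) :
    IsProb (stateDist P π μ t) := by
  induction t with
  | zero => exact hμ
  | succ t ih =>
    refine ⟨fun s' => Finset.sum_nonneg fun s _ => Finset.sum_nonneg fun a _ =>
      mul_nonneg (mul_nonneg (ih.1 s) ((hπ s).1 a)) ((hP s a).1 s'), ?_⟩
    simp only [stateDist]
    rw [Finset.sum_comm]
    refine (Finset.sum_congr rfl fun s _ => ?_).trans ih.2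
    rw [Finset.sum_comm]
    simp only [← Finset.mul_sum, (hP _ _).2, (hπ _).2, mul_one]

lemma IsProb.le_one {α : Type*} [Fintype α] {p : α → ℝ} (hp : IsProb p) (x : α) : p x ≤ 1 :=
  hp.2 ▸ Finset.single_le_sum (fun y _ => hp.1 y) (Finset.mem_univ x)

lemma isProb_dirac [DecidableEq S] (s : S) : IsProb (dirac s) :=
  ⟨fun x => by unfold dirac; split <;> norm_num, by simp [dirac]⟩

lemma abs_expAt_le {P : S → A → S → ℝ} {π : S → A → ℝ} {μ : S → ℝ}
    (hP : ∀ s a, IsProb (P s a)) (hπ : ∀ s, IsProb (π s)) (hμ : IsProb μ) (t : ℕ)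
    (g : S → A → ℝ) : |expAt P π μ t g| ≤ ∑ s, ∑ a, |g s a| := by
  have hd := isProb_stateDist hP hπ hμ t
  refine (Finset.abs_sum_le_sum_abs _ _).trans (Finset.sum_le_sum fun s _ => ?_)
  rw [abs_mul, abs_of_nonneg (hd.1 s)]
  refine (mul_le_of_le_one_left (abs_nonneg _) (hd.le_one s)).trans ?_
  refine (Finset.abs_sum_le_sum_abs _ _).trans (Finset.sum_le_sum fun a _ => ?_)
  rw [abs_mul, abs_of_nonneg ((hπ s).1 a)]
  exact mul_le_of_le_one_left (abs_nonneg _) ((hπ s).le_one a)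

lemma summable_expAt {P : S → A → S → ℝ} {π : S → A → ℝ} {μ : S → ℝ} {γ : ℝ}
    (hP : ∀ s a, IsProb (P s a)) (hπ : ∀ s, IsProb (π s)) (hμ : IsProb μ)
    (hγ0 : 0 ≤ γ) (hγ1 : γ < 1) (g : S → A → ℝ) :
    Summable fun t : ℕ => γ ^ t * expAt P π μ t g := by
  refine Summable.of_norm_bounded
    ((summable_geometric_of_lt_one hγ0 hγ1).mul_right (∑ s, ∑ a, |g s a|)) fun t => ?_
  rw [Real.norm_eq_abs, abs_mul, abs_of_nonneg (pow_nonneg hγ0 t)]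
  exact mul_le_mul_of_nonneg_left (abs_expAt_le hP hπ hμ t g) (pow_nonneg hγ0 t)

lemma expAt_add (P : S → A → S → ℝ) (π : S → A → ℝ) (μ : S → ℝ) (t : ℕ) (f g : S → A → ℝ) :
    expAt P π μ t (fun s a => f s a + g s a) = expAt P π μ t f + expAt P π μ t g := by
  simp only [expAt, mul_add, Finset.sum_add_distrib]

lemma expAt_sub (P : S → A → S → ℝ) (π : S → A → ℝ) (μ : S → ℝ) (t : ℕ) (f g : S → A → ℝ) :
    expAt P π μ t (fun s a => f s a - g s a) = expAt P π μ t f - expAt P π μ t g := by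
  simp only [expAt, mul_sub, Finset.sum_sub_distrib]

lemma expAt_const_mul (P : S → A → S → ℝ) (π : S → A → ℝ) (μ : S → ℝ) (t : ℕ) (c : ℝ)
    (g : S → A → ℝ) :
    expAt P π μ t (fun s a => c * g s a) = c * expAt P π μ t g := by
  simp only [expAt, Finset.mul_sum, mul_left_comm c]

lemma expAt_state {π : S → A → ℝ} (hπ : ∀ s, IsProb (π s)) (P : S → A → S → ℝ) (μ : S → ℝ)
    (t : ℕ) (v : S → ℝ) :
    expAt P π μ t (fun s _ => v s) = ∑ s, stateDist P π μ t s * v s := by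
  simp only [expAt, ← Finset.sum_mul, (hπ _).2, one_mul]

/-- Markov property: averaging `v` over the next state at time `t` is averaging `v` over the
state at time `t + 1`. -/
lemma expAt_next {π : S → A → ℝ} (hπ : ∀ s, IsProb (π s)) (P : S → A → S → ℝ) (μ : S → ℝ)
    (t : ℕ) (v : S → ℝ) :
    expAt P π μ t (fun s a => ∑ s', P s a s' * v s') =
      expAt P π μ (t + 1) (fun s _ => v s) := by
  rw [expAt_state hπ]
  simp only [expAt, stateDist, Finset.sum_mul, Finset.mul_sum]
  rw [Finset.sum_comm (s := (Finset.univ : Finset S)) (t := (Finset.univ : Finset S))]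
  refine Finset.sum_congr rfl fun s _ => ?_
  rw [Finset.sum_comm]
  refine Finset.sum_congr rfl fun s' _ => Finset.sum_congr rfl fun a _ => ?_
  ring

/-- Conditioning on the initial state: `stateDist` is linear in the initial distribution. -/
lemma stateDist_eq_sum_dirac [DecidableEq S] (P : S → A → S → ℝ) (π : S → A → ℝ) (μ : S → ℝ)
    (t : ℕ) (x : S) :
    stateDist P π μ t x = ∑ s, μ s * stateDist P π (dirac s) t x := by
  induction t generalizing x with
  | zero => simp [stateDist, dirac]
  | succ t ih =>
    simp only [stateDist, ih, Finset.sum_mul, Finset.mul_sum]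
    conv_rhs => rw [Finset.sum_comm]
    refine Finset.sum_congr rfl fun s _ => ?_
    conv_rhs => rw [Finset.sum_comm]
    simp only [mul_assoc]

lemma expAt_eq_sum_dirac [DecidableEq S] (P : S → A → S → ℝ) (π : S → A → ℝ) (μ : S → ℝ)
    (t : ℕ) (g : S → A → ℝ) :
    expAt P π μ t g = ∑ s, μ s * expAt P π (dirac s) t g := by
  simp only [expAt]
  simp_rw [stateDist_eq_sum_dirac P π μ t, Finset.sum_mul, Finset.mul_sum Finset.univ _ (μ _),
    mul_assoc]
  rw [Finset.sum_comm]

/-- The mean of `V^π` under `μ` is the regularized return of `π` started from `μ`. -/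
lemma sum_mul_valueV [DecidableEq S] {P : S → A → S → ℝ} {π : S → A → ℝ} {γ : ℝ}
    (hP : ∀ s a, IsProb (P s a)) (hπ : ∀ s, IsProb (π s))
    (hγ0 : 0 ≤ γ) (hγ1 : γ < 1) (r : S → A → ℝ) (μ : S → ℝ) (ε : ℝ) :
    ∑ s, μ s * valueV P r π ε γ s =
      ∑' t : ℕ, γ ^ t * expAt P π μ t (fun s a => r s a + ε * entropy (π s)) := by
  simp only [valueV, ← tsum_mul_left]
  rw [← Summable.tsum_finsetSum fun s _ =>
    (summable_expAt hP hπ (isProb_dirac s) hγ0 hγ1 _).mul_left (μ s)]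
  refine tsum_congr fun t => ?_
  rw [expAt_eq_sum_dirac P π μ t, Finset.mul_sum]
  exact Finset.sum_congr rfl fun s _ => mul_left_comm _ _ _

/-- Performance difference identity: along trajectories of `πstar`, the terms
`γ * V^π(s_{t+1}) - V^π(s_t)` of the advantage telescope, leaving only the mean of `-V^π(s_0)`. -/
lemma tsum_expAt_adv [DecidableEq S] {P : S → A → S → ℝ} {πstar : S → A → ℝ} {μ : S → ℝ} {γ : ℝ}
    (hP : ∀ s a, IsProb (P s a)) (hπstar : ∀ s, IsProb (πstar s)) (hμ : IsProb μ)
    (hγ0 : 0 ≤ γ) (hγ1 : γ < 1) (r π : S → A → ℝ) (ε : ℝ) :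
    ∑' t : ℕ, γ ^ t * expAt P πstar μ t (fun s a => adv P r π ε γ s a) =
      ∑' t : ℕ, γ ^ t * expAt P πstar μ t r - ∑ s, μ s * valueV P r π ε γ s := by
  set V := valueV P r π ε γ with hV
  have hr := summable_expAt hP hπstar hμ hγ0 hγ1 r
  have hv := summable_expAt hP hπstar hμ hγ0 hγ1 (fun s _ => V s)
  have h0 := hv.tsum_eq_zero_add
  have hterm : ∀ t : ℕ, γ ^ t * expAt P πstar μ t (fun s a => adv P r π ε γ s a) =
      γ ^ t * expAt P πstar μ t r + γ ^ (t + 1) * expAt P πstar μ (t + 1) (fun s _ => V s)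
        - γ ^ t * expAt P πstar μ t (fun s _ => V s) := by
    intro t
    simp only [adv, valueQ, ← hV]
    rw [expAt_sub, expAt_add, expAt_const_mul, expAt_next hπstar]
    ring
  have hv' := (summable_nat_add_iff 1).2 hv
  rw [tsum_congr hterm, (hr.add hv').tsum_sub hv, hr.tsum_add hv', h0,
    expAt_state hπstar P μ 0]
  simp only [stateDist, pow_zero, one_mul]
  ring

end Helpers

/-- **Equivalence of the "experts perform better" constraints** (discounted case):
`E_{τ∼π*}[∑ γ^t r] ≥ E_{τ∼π}[∑ γ^t r]` if and only if
`E_{τ∼π*}[∑ γ^t A^π(s_t,a_t)] + E_{τ∼π}[∑ γ^t ε h^π_{s_t}] ≥ 0`. -/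
theorem expert_constraint_iff {S A : Type*} [Fintype S] [Fintype A] [DecidableEq S]
    [Nonempty S] [Nonempty A]
    (P : S → A → S → ℝ) (r : S → A → ℝ) (μ : S → ℝ) (π πstar : S → A → ℝ) (ε γ : ℝ)
    (hP : ∀ s a, IsProb (P s a)) (hπ : ∀ s, IsProb (π s)) (hπstar : ∀ s, IsProb (πstar s))
    (hμ : IsProb μ) (hε : 0 < ε) (hγ0 : 0 ≤ γ) (hγ1 : γ < 1) :
    (∑' t : ℕ, γ ^ t * expAt P πstar μ t r) ≥ (∑' t : ℕ, γ ^ t * expAt P π μ t r) ↔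
      (∑' t : ℕ, γ ^ t * expAt P πstar μ t (fun s a => adv P r π ε γ s a)) +
          (∑' t : ℕ, γ ^ t * expAt P π μ t (fun s _ => ε * entropy (π s))) ≥ 0 := by
  have hr := summable_expAt hP hπ hμ hγ0 hγ1 r
  have hh := summable_expAt hP hπ hμ hγ0 hγ1 (fun s _ => ε * entropy (π s))
  have hV := sum_mul_valueV hP hπ hγ0 hγ1 r μ ε
  simp only [expAt_add, mul_add] at hV
  rw [hr.tsum_add hh] at hV
  rw [tsum_expAt_adv hP hπstar hμ hγ0 hγ1 r π ε, hV]
  constructor <;> intro h <;> linarith
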